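/- For a C² radial function f of ρ, at points where ∇_{H^n}ρ ≠ 0 the Heisenberg Hessian D²_{H^n}f(ρ) has eigenvalues: |∇_{H^n}ρ|²f''(ρ) (simple), 3|∇_{H^n}ρ|²f'(ρ)/ρ (simple), and |∇_{H^n}ρ|²f'(ρ)/ρ with multiplicity 2n−2; at points where ∇_{H^n}ρ = 0 all eigenvalues of D²_{H^n}f(ρ) vanish. -/

import Mathlib

open scoped BigOperators

noncomputable section

/-- Direction vector of the Heisenberg vector field `X_i` at the point `ξ ∈ ℝ^{2n+1}`:
for `i < n`, `X_i = ∂_i + 2 ξ_{i+n} ∂_{2n}`; for `n ≤ i < 2n`, `X_i = ∂_i - 2 ξ_{i-n} ∂_{2n}`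
(indices `0,…,2n`, the last coordinate being index `2n`). -/
def Xvec (n : ℕ) (ξ : Fin (2*n+1) → ℝ) (i : Fin (2*n)) : Fin (2*n+1) → ℝ :=
  fun j =>
    (if (j : ℕ) = (i : ℕ) then 1 else 0) +
    (if (j : ℕ) = 2*n then
        (if h : (i : ℕ) < n then 2 * ξ ⟨(i : ℕ) + n, by omega⟩
         else -2 * ξ ⟨(i : ℕ) - n, by have := i.isLt; omega⟩)
      else 0)

/-- The Heisenberg vector field `X_i` acting on a function. -/
def X (n : ℕ) (i : Fin (2*n)) (f : (Fin (2*n+1) → ℝ) → ℝ)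
    (ξ : Fin (2*n+1) → ℝ) : ℝ :=
  fderiv ℝ f ξ (Xvec n ξ i)

/-- `∑_{i=1}^{2n} ξ_i²`, the squared euclidean norm of the horizontal coordinates. -/
def hsq (n : ℕ) (ξ : Fin (2*n+1) → ℝ) : ℝ :=
  ∑ i : Fin (2*n), (ξ ⟨(i : ℕ), by have := i.isLt; omega⟩)^2

/-- The homogeneous norm `ρ(ξ) = ((∑ ξ_i²)² + ξ_{2n+1}²)^{1/4}`. -/
def rho (n : ℕ) (ξ : Fin (2*n+1) → ℝ) : ℝ :=
  ((hsq n ξ)^2 + (ξ ⟨2*n, by omega⟩)^2) ^ (1/4 : ℝ)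

/-- `|∇_{H^n}ρ(ξ)|²`. -/
def gradSq (n : ℕ) (ξ : Fin (2*n+1) → ℝ) : ℝ :=
  ∑ i : Fin (2*n), (X n i (rho n) ξ)^2

/-- The symmetrized Heisenberg Hessian `D²_{H^n} f = (X_i X_j f)_{sym}`. -/
def HessH (n : ℕ) (f : (Fin (2*n+1) → ℝ) → ℝ) (ξ : Fin (2*n+1) → ℝ) :
    Matrix (Fin (2*n)) (Fin (2*n)) ℝ :=
  Matrix.of fun i j =>
    (X n i (fun η => X n j f η) ξ + X n j (fun η => X n i f η) ξ) / 2

/-- If `w` and `v` are orthogonal, `c I + a w wᵀ + b v vᵀ` has eigenvalues `c + a |w|²`,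
`c + b |v|²`, and `c` with multiplicity `card ι - 2`. -/
lemma Matrix.charpoly_scalar_add_orthogonal_rank_two {ι : Type*} [Fintype ι] [DecidableEq ι]
    (hι : 2 ≤ Fintype.card ι) (M : Matrix ι ι ℝ) (w v : ι → ℝ) (a b c : ℝ)
    (hM : ∀ i j, M i j = (if i = j then c else 0) + a * (w i * w j) + b * (v i * v j))
    (hwv : ∑ i, w i * v i = 0) :
    M.charpoly.roots = (c + a * ∑ i, w i ^ 2) ::ₘ (c + b * ∑ i, v i ^ 2) ::ₘ
      Multiset.replicate (Fintype.card ι - 2) c := by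
  let U : Matrix ι (Fin 2) ℝ := Matrix.of fun i => ![w i, v i]
  let V : Matrix (Fin 2) ι ℝ := Matrix.of ![fun i => a * w i, fun i => b * v i]
  have hVU : V * U = Matrix.diagonal ![a * ∑ i, w i ^ 2, b * ∑ i, v i ^ 2] := by
    ext k l
    fin_cases k <;> fin_cases l
    · simp [V, U, Matrix.mul_apply, Finset.mul_sum, sq, mul_assoc]
    · simp [V, U, Matrix.mul_apply, mul_assoc, ← Finset.mul_sum, hwv]
    · simp [V, U, Matrix.mul_apply, mul_assoc, ← Finset.mul_sum, mul_comm (v _), hwv]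
    · simp [V, U, Matrix.mul_apply, Finset.mul_sum, sq, mul_assoc]
  have hUV : M = U * V - Matrix.scalar ι (-c) := by
    ext i j
    simp only [hM, Matrix.sub_apply, Matrix.mul_apply, Fin.sum_univ_two, Matrix.scalar_apply,
      Matrix.diagonal_apply, U, V, Matrix.of_apply, Matrix.cons_val_zero, Matrix.cons_val_one]
    split_ifs <;> ring
  have hcomp : M.charpoly = (Polynomial.X - Polynomial.C c) ^ (Fintype.card ι - 2) *
      ((Polynomial.X - Polynomial.C (c + a * ∑ i, w i ^ 2)) *
        (Polynomial.X - Polynomial.C (c + b * ∑ i, v i ^ 2))) := by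
    rw [hUV, Matrix.charpoly_sub_scalar, Matrix.charpoly_mul_comm_of_le _ _ (by simpa using hι),
      hVU, Matrix.charpoly_diagonal]
    simp only [Fin.prod_univ_two, Polynomial.mul_comp, Polynomial.pow_comp, Polynomial.X_comp,
      Polynomial.sub_comp, Polynomial.C_comp, Fintype.card_fin, map_neg, map_add,
      Matrix.cons_val_zero, Matrix.cons_val_one]
    ring
  have h₁ := Polynomial.X_sub_C_ne_zero (c + a * ∑ i, w i ^ 2)
  have h₂ := Polynomial.X_sub_C_ne_zero (c + b * ∑ i, v i ^ 2)
  have h₃ := pow_ne_zero (Fintype.card ι - 2) (Polynomial.X_sub_C_ne_zero c)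
  rw [hcomp, Polynomial.roots_mul (mul_ne_zero h₃ (mul_ne_zero h₁ h₂)),
    Polynomial.roots_mul (mul_ne_zero h₁ h₂), Polynomial.roots_pow, Polynomial.roots_X_sub_C,
    Polynomial.roots_X_sub_C, Polynomial.roots_X_sub_C, add_comm, Multiset.nsmul_singleton,
    Multiset.singleton_add, Multiset.cons_add, Multiset.singleton_add]

/-- The index paired with `i` by the symplectic structure: `i + n` or `i - n`. -/
def conjIndex (n : ℕ) (i : Fin (2*n)) : Fin (2*n) :=
  if h : (i : ℕ) < n then ⟨(i : ℕ) + n, by omega⟩ else ⟨(i : ℕ) - n, by omega⟩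

/-- The sign attached to `i` by the symplectic structure. -/
def conjSign (n : ℕ) (i : Fin (2*n)) : ℝ := if (i : ℕ) < n then 1 else -1

lemma conjIndex_involutive (n : ℕ) : Function.Involutive (conjIndex n) := by
  intro i
  have := i.isLt
  by_cases h : (i : ℕ) < n
  · simp [conjIndex, h]
  · have h' : (i : ℕ) - n < n := by omega
    simp [conjIndex, h, h', Nat.sub_add_cancel (not_lt.1 h)]

lemma conjSign_conjIndex (n : ℕ) (i : Fin (2*n)) :
    conjSign n (conjIndex n i) = -conjSign n i := by
  unfold conjSign conjIndex
  split_ifs <;> simp_all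
  omega

lemma conjSign_sq (n : ℕ) (i : Fin (2*n)) : conjSign n i ^ 2 = 1 := by
  unfold conjSign
  split_ifs <;> norm_num

/-- The coordinates of the symplectic rotation `Jx` of the horizontal part `x` of `ξ`. -/
def rotCoord (n : ℕ) (ξ : Fin (2*n+1) → ℝ) (i : Fin (2*n)) : ℝ :=
  conjSign n i * ξ (conjIndex n i).castSucc

lemma sum_rotCoord_sq (n : ℕ) (ξ : Fin (2*n+1) → ℝ) :
    ∑ i, rotCoord n ξ i ^ 2 = hsq n ξ := by
  simp only [rotCoord, mul_pow, conjSign_sq, one_mul]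
  exact (conjIndex_involutive n).bijective.sum_comp (fun i => ξ i.castSucc ^ 2)

lemma sum_mul_rotCoord (n : ℕ) (ξ : Fin (2*n+1) → ℝ) :
    ∑ i : Fin (2*n), ξ i.castSucc * rotCoord n ξ i = 0 := by
  have h := (conjIndex_involutive n).bijective.sum_comp
    (fun i => ξ i.castSucc * rotCoord n ξ i)
  simp only [rotCoord, conjSign_conjIndex, conjIndex_involutive n _] at h ⊢
  have h' : ∑ i : Fin (2*n), ξ (conjIndex n i).castSucc * (-conjSign n i * ξ i.castSucc) =
      -∑ i : Fin (2*n), ξ i.castSucc * (conjSign n i * ξ (conjIndex n i).castSucc) := by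
    rw [← Finset.sum_neg_distrib]
    exact Finset.sum_congr rfl fun i _ => by ring
  linarith

lemma Xvec_castSucc (n : ℕ) (ξ : Fin (2*n+1) → ℝ) (i j : Fin (2*n)) :
    Xvec n ξ i j.castSucc = if j = i then 1 else 0 := by
  have := j.isLt
  simp [Xvec, Fin.ext_iff, this.ne]

lemma Xvec_last (n : ℕ) (ξ : Fin (2*n+1) → ℝ) (i : Fin (2*n)) :
    Xvec n ξ i (Fin.last (2*n)) = 2 * rotCoord n ξ i := by
  have := i.isLt
  unfold Xvec rotCoord conjSign conjIndex
  split_ifs <;> simp_all <;> first | rfl | omega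

section Derivation

variable {n : ℕ} {ξ : Fin (2*n+1) → ℝ} {F G : (Fin (2*n+1) → ℝ) → ℝ} (i : Fin (2*n))

lemma X_add (hF : DifferentiableAt ℝ F ξ) (hG : DifferentiableAt ℝ G ξ) :
    X n i (fun η => F η + G η) ξ = X n i F ξ + X n i G ξ := by
  simp [X, fderiv_fun_add hF hG]

lemma X_mul (hF : DifferentiableAt ℝ F ξ) (hG : DifferentiableAt ℝ G ξ) :
    X n i (fun η => F η * G η) ξ = F ξ * X n i G ξ + G ξ * X n i F ξ := by
  simp [X, fderiv_fun_mul hF hG]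

lemma X_comp {g : ℝ → ℝ} {g' : ℝ} (hg : HasDerivAt g g' (F ξ)) (hF : DifferentiableAt ℝ F ξ) :
    X n i (fun η => g (F η)) ξ = g' * X n i F ξ := by
  have h := (hg.comp_hasFDerivAt ξ hF.hasFDerivAt).fderiv
  simp only [Function.comp_def] at h
  simp [X, h]

lemma X_congr (h : F =ᶠ[nhds ξ] G) : X n i F ξ = X n i G ξ := by
  simp [X, h.fderiv_eq]

lemma X_coord (j : Fin (2*n+1)) : X n i (fun η => η j) ξ = Xvec n ξ i j := by
  have h := (ContinuousLinearMap.proj (R := ℝ) (φ := fun _ : Fin (2*n+1) => ℝ) j).hasFDerivAt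
    (x := ξ)
  simp only [X]
  rw [HasFDerivAt.fderiv (f := fun η : Fin (2*n+1) → ℝ => η j) h]
  rfl

end Derivation

lemma differentiable_hsq (n : ℕ) : Differentiable ℝ (hsq n) := by
  unfold hsq
  fun_prop

lemma differentiable_rotCoord (n : ℕ) (j : Fin (2*n)) :
    Differentiable ℝ (fun η => rotCoord n η j) := by
  unfold rotCoord
  fun_prop

lemma X_hsq (n : ℕ) (i : Fin (2*n)) (ξ : Fin (2*n+1) → ℝ) :
    X n i (hsq n) ξ = 2 * ξ i.castSucc := by
  have h : fderiv ℝ (hsq n) ξ = ∑ j : Fin (2*n),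
      fderiv ℝ (fun η : Fin (2*n+1) → ℝ => η j.castSucc ^ 2) ξ :=
    fderiv_fun_sum fun j _ => by fun_prop
  have hj : ∀ j : Fin (2*n), fderiv ℝ (fun η : Fin (2*n+1) → ℝ => η j.castSucc ^ 2) ξ
      (Xvec n ξ i) = if j = i then 2 * ξ j.castSucc else 0 := fun j => by
    have := X_comp (F := fun η : Fin (2*n+1) → ℝ => η j.castSucc) (ξ := ξ) i
      (hasDerivAt_pow 2 (ξ j.castSucc)) (by fun_prop)
    rw [X_coord, Xvec_castSucc] at this
    refine this.trans ?_
    split_ifs <;> simp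
  simp [X, h, hj]

lemma X_rotCoord (n : ℕ) (i j : Fin (2*n)) (ξ : Fin (2*n+1) → ℝ) :
    X n i (fun η => rotCoord n η j) ξ = if conjIndex n j = i then conjSign n j else 0 := by
  unfold rotCoord
  rw [X_mul i (differentiableAt_const _) (by fun_prop), X_coord, Xvec_castSucc]
  simp [X]

/-- The vector `h x + t Jx`, equal to `ρ³ ∇_{H^n} ρ`. -/
def radialVec (n : ℕ) (ξ : Fin (2*n+1) → ℝ) (i : Fin (2*n)) : ℝ :=
  hsq n ξ * ξ i.castSucc + ξ (Fin.last (2*n)) * rotCoord n ξ i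

/-- The vector `h Jx - t x`, the symplectic rotation of `radialVec`. -/
def rotRadialVec (n : ℕ) (ξ : Fin (2*n+1) → ℝ) (i : Fin (2*n)) : ℝ :=
  hsq n ξ * rotCoord n ξ i - ξ (Fin.last (2*n)) * ξ i.castSucc

lemma sum_radialVec_mul_rotRadialVec (n : ℕ) (ξ : Fin (2*n+1) → ℝ) :
    ∑ i, radialVec n ξ i * rotRadialVec n ξ i = 0 := by
  have h : ∀ i, radialVec n ξ i * rotRadialVec n ξ i =
      (hsq n ξ ^ 2 - ξ (Fin.last (2*n)) ^ 2) * (ξ i.castSucc * rotCoord n ξ i) +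
      hsq n ξ * ξ (Fin.last (2*n)) * (rotCoord n ξ i ^ 2) -
      hsq n ξ * ξ (Fin.last (2*n)) * (ξ i.castSucc ^ 2) := fun i => by
    unfold radialVec rotRadialVec; ring
  have hx : ∑ i : Fin (2*n), ξ i.castSucc ^ 2 = hsq n ξ := rfl
  simp only [h, Finset.sum_sub_distrib, Finset.sum_add_distrib, ← Finset.mul_sum,
    sum_mul_rotCoord, sum_rotCoord_sq, hx]
  ring

lemma sum_radialVec_sq (n : ℕ) (ξ : Fin (2*n+1) → ℝ) :
    ∑ i, radialVec n ξ i ^ 2 = hsq n ξ * (hsq n ξ ^ 2 + ξ (Fin.last (2*n)) ^ 2) := by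
  have h : ∀ i, radialVec n ξ i ^ 2 =
      hsq n ξ ^ 2 * ξ i.castSucc ^ 2 + ξ (Fin.last (2*n)) ^ 2 * (rotCoord n ξ i ^ 2) +
      2 * hsq n ξ * ξ (Fin.last (2*n)) * (ξ i.castSucc * rotCoord n ξ i) := fun i => by
    unfold radialVec; ring
  have hx : ∑ i : Fin (2*n), ξ i.castSucc ^ 2 = hsq n ξ := rfl
  simp only [h, Finset.sum_add_distrib, ← Finset.mul_sum,
    sum_mul_rotCoord, sum_rotCoord_sq, hx]
  ring

lemma sum_rotRadialVec_sq (n : ℕ) (ξ : Fin (2*n+1) → ℝ) :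
    ∑ i, rotRadialVec n ξ i ^ 2 = hsq n ξ * (hsq n ξ ^ 2 + ξ (Fin.last (2*n)) ^ 2) := by
  have h : ∀ i, rotRadialVec n ξ i ^ 2 =
      hsq n ξ ^ 2 * (rotCoord n ξ i ^ 2) + ξ (Fin.last (2*n)) ^ 2 * ξ i.castSucc ^ 2 -
      2 * hsq n ξ * ξ (Fin.last (2*n)) * (ξ i.castSucc * rotCoord n ξ i) := fun i => by
    unfold rotRadialVec; ring
  have hx : ∑ i : Fin (2*n), ξ i.castSucc ^ 2 = hsq n ξ := rfl
  simp only [h, Finset.sum_sub_distrib, Finset.sum_add_distrib, ← Finset.mul_sum,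
    sum_mul_rotCoord, sum_rotCoord_sq, hx]
  ring

lemma differentiable_radialVec (n : ℕ) (j : Fin (2*n)) :
    Differentiable ℝ (fun η => radialVec n η j) := by
  have := differentiable_hsq n
  have := differentiable_rotCoord n j
  unfold radialVec
  fun_prop

lemma X_radialVec (n : ℕ) (i j : Fin (2*n)) (ξ : Fin (2*n+1) → ℝ) :
    X n i (fun η => radialVec n η j) ξ =
      hsq n ξ * (if j = i then 1 else 0) + 2 * (ξ i.castSucc * ξ j.castSucc) +
      2 * (rotCoord n ξ i * rotCoord n ξ j) +
      ξ (Fin.last (2*n)) * (if conjIndex n j = i then conjSign n j else 0) := by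
  have hh := differentiable_hsq n
  have hr := differentiable_rotCoord n j
  unfold radialVec
  rw [X_add i (by fun_prop) (by fun_prop), X_mul i (by fun_prop) (by fun_prop),
    X_mul i (by fun_prop) (by fun_prop), X_hsq, X_rotCoord, X_coord, X_coord, Xvec_castSucc,
    Xvec_last]
  ring

lemma rho_pow_four (n : ℕ) (ξ : Fin (2*n+1) → ℝ) :
    rho n ξ ^ 4 = hsq n ξ ^ 2 + ξ (Fin.last (2*n)) ^ 2 := by
  unfold rho
  rw [← Real.rpow_natCast, ← Real.rpow_mul (by positivity)]
  norm_num
  rfl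

lemma differentiableAt_rho {n : ℕ} {ξ : Fin (2*n+1) → ℝ} (hr : 0 < rho n ξ) :
    DifferentiableAt ℝ (rho n) ξ := by
  have hh := differentiable_hsq n
  have h4 := rho_pow_four n ξ
  unfold rho
  refine DifferentiableAt.rpow_const (by fun_prop) (Or.inl ?_)
  exact ne_of_gt (h4 ▸ pow_pos hr 4)

lemma X_rho {n : ℕ} {ξ : Fin (2*n+1) → ℝ} (hr : 0 < rho n ξ) (i : Fin (2*n)) :
    X n i (rho n) ξ = radialVec n ξ i / rho n ξ ^ 3 := by
  have hh := differentiable_hsq n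
  have h₁ := X_comp i (hasDerivAt_pow 4 (rho n ξ)) (differentiableAt_rho hr)
  simp only [rho_pow_four] at h₁
  rw [X_add i (by fun_prop) (by fun_prop),
    X_comp i (hasDerivAt_pow 2 (hsq n ξ)) (by fun_prop),
    X_comp (F := fun η => η (Fin.last (2*n))) i (hasDerivAt_pow 2 (ξ (Fin.last (2*n))))
      (by fun_prop), X_hsq, X_coord, Xvec_last] at h₁
  norm_num at h₁
  rw [eq_div_iff (by positivity), radialVec]
  linarith

lemma gradSq_eq {n : ℕ} {ξ : Fin (2*n+1) → ℝ} (hr : 0 < rho n ξ) :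
    gradSq n ξ = hsq n ξ / rho n ξ ^ 2 := by
  simp only [gradSq, X_rho hr, div_pow, ← Finset.sum_div, sum_radialVec_sq, ← rho_pow_four]
  field_simp

lemma X_X_radial {n : ℕ} {f : ℝ → ℝ} (hf : ContDiffOn ℝ 2 f (Set.Ioi 0))
    {ξ : Fin (2*n+1) → ℝ} (hr : 0 < rho n ξ) (i j : Fin (2*n)) :
    X n i (fun η => X n j (fun ζ => f (rho n ζ)) η) ξ =
      (deriv (deriv f) (rho n ξ) / rho n ξ ^ 6 - 3 * deriv f (rho n ξ) / rho n ξ ^ 7) *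
        (radialVec n ξ i * radialVec n ξ j) +
      deriv f (rho n ξ) / rho n ξ ^ 3 * X n i (fun η => radialVec n η j) ξ := by
  have hev : ∀ᶠ η in nhds ξ, 0 < rho n η :=
    (differentiableAt_rho hr).continuousAt.eventually (lt_mem_nhds hr)
  have hfirst : ∀ r > 0, HasDerivAt f (deriv f r) r := fun r hr =>
    ((hf.contDiffAt (Ioi_mem_nhds hr)).differentiableAt (by norm_num)).hasDerivAt
  have hsecond : HasDerivAt (deriv f) (deriv (deriv f) (rho n ξ)) (rho n ξ) :=
    (((hf.deriv_of_isOpen (m := 1) isOpen_Ioi (by norm_num)).contDiffAt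
      (Ioi_mem_nhds hr)).differentiableAt (by norm_num)).hasDerivAt
  have hcongr : (fun η => X n j (fun ζ => f (rho n ζ)) η) =ᶠ[nhds ξ]
      fun η => deriv f (rho n η) / rho n η ^ 3 * radialVec n η j := by
    filter_upwards [hev] with η hη
    rw [X_comp j (hfirst _ hη) (differentiableAt_rho hη), X_rho hη]
    ring
  have hquot := hsecond.fun_div (hasDerivAt_pow 3 (rho n ξ)) (pow_ne_zero 3 hr.ne')
  rw [X_congr i hcongr, X_mul (F := fun η => deriv f (rho n η) / rho n η ^ 3) i
    (hquot.differentiableAt.comp ξ (differentiableAt_rho hr))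
    (differentiable_radialVec n j ξ), X_comp (g := fun r => deriv f r / r ^ 3) i hquot
      (differentiableAt_rho hr), X_rho hr]
  push_cast
  field_simp
  ring

lemma conjSign_ite_add (n : ℕ) (i j : Fin (2*n)) :
    (if conjIndex n j = i then conjSign n j else 0) +
      (if conjIndex n i = j then conjSign n i else 0) = 0 := by
  have hiff : conjIndex n j = i ↔ conjIndex n i = j :=
    ⟨fun h => h ▸ conjIndex_involutive n j, fun h => h ▸ conjIndex_involutive n i⟩
  by_cases h : conjIndex n i = j
  · rw [if_pos (hiff.2 h), if_pos h, ← h, conjSign_conjIndex]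
    ring
  · rw [if_neg (mt hiff.1 h), if_neg h, add_zero]

lemma HessH_radial_apply {n : ℕ} {f : ℝ → ℝ} (hf : ContDiffOn ℝ 2 f (Set.Ioi 0))
    {ξ : Fin (2*n+1) → ℝ} (hr : 0 < rho n ξ) (i j : Fin (2*n)) :
    HessH n (fun η => f (rho n η)) ξ i j =
      (if i = j then gradSq n ξ * deriv f (rho n ξ) / rho n ξ else 0) +
      (deriv (deriv f) (rho n ξ) / rho n ξ ^ 6 - deriv f (rho n ξ) / rho n ξ ^ 7) *
        (radialVec n ξ i * radialVec n ξ j) +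
      2 * deriv f (rho n ξ) / rho n ξ ^ 7 * (rotRadialVec n ξ i * rotRadialVec n ξ j) := by
  have hsum : radialVec n ξ i * radialVec n ξ j + rotRadialVec n ξ i * rotRadialVec n ξ j =
      rho n ξ ^ 4 * (ξ i.castSucc * ξ j.castSucc + rotCoord n ξ i * rotCoord n ξ j) := by
    rw [rho_pow_four, radialVec, radialVec, rotRadialVec, rotRadialVec]
    ring
  have hrot : rotRadialVec n ξ i * rotRadialVec n ξ j =
      rho n ξ ^ 4 * (ξ i.castSucc * ξ j.castSucc + rotCoord n ξ i * rotCoord n ξ j) -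
      radialVec n ξ i * radialVec n ξ j := by linarith
  have hδ : (if j = i then (1 : ℝ) else 0) = if i = j then 1 else 0 := by simp only [eq_comm]
  have hanti := eq_neg_of_add_eq_zero_left (conjSign_ite_add n i j)
  have hc : (if i = j then gradSq n ξ * deriv f (rho n ξ) / rho n ξ else 0) =
      hsq n ξ * deriv f (rho n ξ) / rho n ξ ^ 3 * (if i = j then 1 else 0) := by
    rw [gradSq_eq hr]
    split_ifs
    · field_simp
    · simp
  simp only [HessH, Matrix.of_apply, X_X_radial hf hr, X_radialVec, hanti, hrot, hδ, hc]
  field_simp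
  ring

/-- for a C² radial function `f(ρ)`, at points where `∇_{H^n}ρ ≠ 0` the
eigenvalues (with multiplicity) of the Heisenberg Hessian `D²_{H^n}(f ∘ ρ)` are
`|∇_{H^n}ρ|² f''(ρ)` (simple), `3|∇_{H^n}ρ|² f'(ρ)/ρ` (simple) and
`|∇_{H^n}ρ|² f'(ρ)/ρ` with multiplicity `2n-2`; at points where `∇_{H^n}ρ = 0`
all eigenvalues vanish. -/
theorem heisenberg_radial_hessian_eigenvalues (n : ℕ) (f : ℝ → ℝ)
    (hf : ContDiffOn ℝ 2 f (Set.Ioi 0)) (ξ : Fin (2*n+1) → ℝ)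
    (hr : 0 < rho n ξ)
    (hM : (HessH n (fun η => f (rho n η)) ξ).IsHermitian) :
    ((∃ i : Fin (2*n), X n i (rho n) ξ ≠ 0) →
      (Finset.univ.val.map hM.eigenvalues :
          Multiset ℝ) =
        (gradSq n ξ * deriv (deriv f) (rho n ξ)) ::ₘ
        (3 * gradSq n ξ * deriv f (rho n ξ) / rho n ξ) ::ₘ
        Multiset.replicate (2*n - 2)
          (gradSq n ξ * deriv f (rho n ξ) / rho n ξ)) ∧
    ((∀ i : Fin (2*n), X n i (rho n) ξ = 0) →
      ∀ i, hM.eigenvalues i = 0) := by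
  have hG : 0 < hsq n ξ ^ 2 + ξ (Fin.last (2*n)) ^ 2 := rho_pow_four n ξ ▸ pow_pos hr 4
  refine ⟨?_, ?_⟩
  · rintro ⟨i, -⟩
    have hn := i.isLt
    have hroots := Matrix.charpoly_scalar_add_orthogonal_rank_two
      (by rw [Fintype.card_fin]; omega) _ _ _ _ _ _ (HessH_radial_apply hf hr)
      (sum_radialVec_mul_rotRadialVec n ξ)
    rw [hM.roots_charpoly_eq_eigenvalues, sum_radialVec_sq, sum_rotRadialVec_sq, ← rho_pow_four,
      Fintype.card_fin] at hroots
    refine Eq.trans hroots ?_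
    congr 1
    · rw [gradSq_eq hr]
      field_simp
      ring
    · congr 1
      rw [gradSq_eq hr]
      field_simp
      ring
  · intro hX
    have hw : ∀ i, radialVec n ξ i = 0 := fun i => by
      have h := hX i
      rw [X_rho hr, div_eq_zero_iff] at h
      exact h.resolve_right (pow_ne_zero 3 hr.ne')
    have hh : hsq n ξ = 0 := by
      have h := sum_radialVec_sq n ξ
      simp only [hw, ne_eq, OfNat.ofNat_ne_zero, not_false_eq_true, zero_pow,
        Finset.sum_const_zero] at h
      exact (mul_eq_zero.1 h.symm).resolve_right hG.ne'
    have hv : ∀ i, rotRadialVec n ξ i = 0 := fun i => by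
      have h := sum_rotRadialVec_sq n ξ
      rw [hh, zero_mul, Finset.sum_eq_zero_iff_of_nonneg fun _ _ => sq_nonneg _] at h
      exact pow_eq_zero_iff two_ne_zero |>.1 (h i (Finset.mem_univ i))
    have hzero : HessH n (fun η => f (rho n η)) ξ = 0 := by
      ext i j
      simp [HessH_radial_apply hf hr, hw, hv, gradSq_eq hr, hh]
    exact congrFun (hM.eigenvalues_eq_zero_iff.2 hzero)
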